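/- Let K be a field, n ≥ 2, with n invertible in K (char K = 0 or char K does not divide n), and let f(x_1,…,x_m) be a multilinear polynomial over K. Then f does not satisfy (S1) and does not satisfy (S2) if and only if the K-linear span of Im(f) on M_n(K) equals M_n(K). -/

import Mathlib

/-!
By the Leibniz rule for `ad b`, the span of the image of `f` is a Lie ideal of `Mₙ(K)`. A Lie ideal
with a member that has a nonzero entry at `(i, j)`, `i ≠ j`, contains `Eᵢᵢ - Eⱼⱼ`; if it also has a
member of nonzero trace, it contains every off-diagonal matrix unit, hence the hyperplane of
trace-zero matrices, and therefore all of `Mₙ(K)`. A failure of (S1) provides the off-diagonal entry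
and a failure of (S2) provides the nonzero trace. Conversely, `f` is determined by its values at
matrix units, which are homogeneous, so (S1) makes every off-diagonal entry of `f` vanish
identically, and (S2) does the same for its trace.
-/

/-- Evaluation of the multilinear polynomial `f(x₁,…,x_m) = ∑_{σ ∈ S_m} α_σ x_{σ(1)}⋯x_{σ(m)}`
given by coefficients `α` at the tuple `a`. -/
def mlEval {K A : Type} [Field K] [Ring A] [Algebra K A] {m : ℕ}
    (α : Equiv.Perm (Fin m) → K) (a : Fin m → A) : A :=
  ∑ σ : Equiv.Perm (Fin m), α σ • (List.ofFn fun i => a (σ i)).prod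

/-- The image of the multilinear polynomial with coefficients `α` on the algebra `A`. -/
def mlImage {K A : Type} [Field K] [Ring A] [Algebra K A] {m : ℕ}
    (α : Equiv.Perm (Fin m) → K) : Set A :=
  Set.range (mlEval α)

/-- `a` is homogeneous of degree `g` in the Vasilovsky `ZMod n`-grading of `Mₙ(K)`:
`a` lies in the span of the matrix units `E i j` with `j - i ≡ g (mod n)`. -/
def VasHomog {K : Type} [Field K] {n : ℕ} (g : ZMod n)
    (a : Matrix (Fin n) (Fin n) K) : Prop :=
  ∀ i j : Fin n, ((j.val : ZMod n) - (i.val : ZMod n)) ≠ g → a i j = 0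

/-- Statement (S0): `f` vanishes on homogeneous tuples whose degrees sum to `0`. -/
def StmtS0 {K : Type} [Field K] (n : ℕ) {m : ℕ} (α : Equiv.Perm (Fin m) → K) : Prop :=
  ∀ (g : Fin m → ZMod n) (a : Fin m → Matrix (Fin n) (Fin n) K),
    (∀ i, VasHomog (g i) (a i)) → (∑ i, g i) = 0 → mlEval α a = 0

/-- Statement (S1): `f` vanishes on homogeneous tuples whose degrees sum to a nonzero element. -/
def StmtS1 {K : Type} [Field K] (n : ℕ) {m : ℕ} (α : Equiv.Perm (Fin m) → K) : Prop :=
  ∀ (g : Fin m → ZMod n) (a : Fin m → Matrix (Fin n) (Fin n) K),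
    (∀ i, VasHomog (g i) (a i)) → (∑ i, g i) ≠ 0 → mlEval α a = 0

/-- Statement (S2): `f` has trace-zero values on homogeneous tuples whose degrees sum to `0`. -/
def StmtS2 {K : Type} [Field K] (n : ℕ) {m : ℕ} (α : Equiv.Perm (Fin m) → K) : Prop :=
  ∀ (g : Fin m → ZMod n) (a : Fin m → Matrix (Fin n) (Fin n) K),
    (∀ i, VasHomog (g i) (a i)) → (∑ i, g i) = 0 → Matrix.trace (mlEval α a) = 0

/-- The set of scalar matrices in `Mₙ(K)`. -/
def scalarSet (K : Type) [Field K] (n : ℕ) : Set (Matrix (Fin n) (Fin n) K) :=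
  {b | ∃ c : K, b = c • (1 : Matrix (Fin n) (Fin n) K)}

/-- The set `slₙ(K)` of trace-zero matrices in `Mₙ(K)`. -/
def slSet (K : Type) [Field K] (n : ℕ) : Set (Matrix (Fin n) (Fin n) K) :=
  {b | Matrix.trace b = 0}

open Matrix

section Lie

attribute [local instance] LieRing.ofAssociativeRing

theorem lie_list_prod_ofFn {A : Type*} [Ring A] (b : A) {m : ℕ} (a : Fin m → A) :
    ⁅b, (List.ofFn a).prod⁆ = ∑ i, (List.ofFn (Function.update a i ⁅b, a i⁆)).prod := by
  induction m with
  | zero => simp [Ring.lie_def]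
  | succ m ih =>
    have tail_update (i : Fin m) (x : A) : (fun j : Fin m ↦ Function.update a i.succ x j.succ) =
        Function.update (fun j ↦ a j.succ) i x :=
      Function.update_comp_eq_of_injective a (Fin.succ_injective m) i x
    have leibniz (x y : A) : ⁅b, x * y⁆ = ⁅b, x⁆ * y + x * ⁅b, y⁆ := by
      simp only [Ring.lie_def]
      noncomm_ring
    have head_update (i : Fin m) (x : A) : Function.update a i.succ x 0 = a 0 :=
      Function.update_of_ne (Fin.succ_ne_zero i).symm x a
    simp [Fin.sum_univ_succ, List.ofFn_succ, leibniz, ih, Finset.mul_sum, tail_update, head_update]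

theorem lie_mlEval {K A : Type} [Field K] [Ring A] [Algebra K A] {m : ℕ}
    (α : Equiv.Perm (Fin m) → K) (b : A) (a : Fin m → A) :
    ⁅b, mlEval α a⁆ = ∑ i, mlEval α (Function.update a i ⁅b, a i⁆) := by
  have lie_monomial (σ : Equiv.Perm (Fin m)) : ⁅b, α σ • (List.ofFn fun i ↦ a (σ i)).prod⁆ =
      ∑ i, α σ • (List.ofFn fun j ↦ Function.update a i ⁅b, a i⁆ (σ j)).prod := by
    rw [LieAlgebra.lie_smul, lie_list_prod_ofFn, Finset.smul_sum]
    refine Fintype.sum_equiv σ _ _ fun i ↦ ?_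
    rw [← Function.update_comp_eq_of_injective' a σ.injective]
  simp only [mlEval, lie_sum, lie_monomial]
  exact Finset.sum_comm

/-- The linear span of the image of a multilinear polynomial on an algebra, as an ideal of the Lie
algebra given by the commutator bracket. -/
def mlLieIdeal {K A : Type} [Field K] [Ring A] [Algebra K A] {m : ℕ}
    (α : Equiv.Perm (Fin m) → K) : LieIdeal K A where
  __ := Submodule.span K (mlImage α)
  lie_mem {b _} := by
    suffices (Submodule.span K (mlImage α)).map (LieAlgebra.ad K A b) ≤
        Submodule.span K (mlImage α) from
      fun hx ↦ this (Submodule.mem_map_of_mem hx)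
    rw [Submodule.map_span_le]
    rintro _ ⟨a, rfl⟩
    rw [LieAlgebra.ad_apply, lie_mlEval]
    exact Submodule.sum_mem _ fun i _ ↦ Submodule.subset_span ⟨_, rfl⟩

namespace MatrixLieIdeal

section CommRing

variable {ι R : Type*} [Fintype ι] [DecidableEq ι] [CommRing R]
  {I : LieIdeal R (Matrix ι ι R)} {i j : ι}

theorem single_add_single_swap_mem {b : Matrix ι ι R} (hb : b ∈ I) (hij : i ≠ j) :
    single i j (b i j) + single j i (b j i) ∈ I := by
  have h : ⁅single j j (1 : R), ⁅single i i (1 : R), b⁆⁆ ∈ I := I.lie_mem (I.lie_mem hb)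
  have hzero : b * single i i (1 : R) * single j j (1 : R) = 0 := by
    rw [mul_assoc, single_mul_single_of_ne _ _ _ _ hij, mul_zero]
  convert I.neg_mem h using 1
  simp [Ring.lie_def, mul_sub, sub_mul, ← mul_assoc, hij.symm, hzero]

theorem single_self_sub_single_self_mem {b : Matrix ι ι R} (hb : b ∈ I) (hij : i ≠ j) :
    single i i (b i j) - single j j (b i j) ∈ I := by
  convert lie_mem_left R _ I _ (single j i 1) (single_add_single_swap_mem hb hij) using 1
  simp [Ring.lie_def, mul_add, add_mul, hij]

theorem single_diag_sub_diag_mem {t : Matrix ι ι R} (ht : t ∈ I) (hij : i ≠ j) :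
    single i j (t i i - t j j) ∈ I := by
  have h : ⁅t, single i j (1 : R)⁆ ∈ I := lie_mem_left R _ I _ _ ht
  convert single_add_single_swap_mem h hij using 1
  simp [Ring.lie_def, hij, hij.symm]

theorem single_mem_of_single_mem_row {k : ι} (h : single i k (1 : R) ∈ I) (hij : i ≠ j) (c : R) :
    single i j c ∈ I := by
  convert lie_mem_left R _ I _ (single k j c) h using 1
  simp [Ring.lie_def, hij.symm]

theorem single_mem_of_single_mem_col {k : ι} (h : single k j (1 : R) ∈ I) (hij : i ≠ j) (c : R) :
    single i j c ∈ I := by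
  convert I.lie_mem (x := single i k c) h using 1
  simp [Ring.lie_def, hij.symm]

theorem ker_trace_le_of_forall_single_mem (h : ∀ p q, p ≠ q → single p q (1 : R) ∈ I) :
    LinearMap.ker (traceLinearMap ι R R) ≤ I.toSubmodule := by
  cases isEmpty_or_nonempty ι
  · exact fun x _ ↦ Subsingleton.elim 0 x ▸ I.zero_mem
  have k : ι := Classical.arbitrary ι
  have mkQ_factors_through_trace : I.toSubmodule.mkQ =
      I.toSubmodule.mkQ ∘ₗ singleLinearMap R k k ∘ₗ traceLinearMap ι R R := by
    refine Matrix.ext_linearMap R fun p q ↦ LinearMap.ext fun c ↦ (Submodule.Quotient.eq _).2 ?_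
    rcases eq_or_ne p q with rfl | hpq
    · rcases eq_or_ne p k with rfl | hpk
      · simp
      · simpa [hpk] using single_self_sub_single_self_mem
          (single_mem_of_single_mem_row (h p k hpk) hpk c) hpk
    · simpa [hpq] using single_mem_of_single_mem_row (h p q hpq) hpq c
  intro x hx
  rw [← Submodule.ker_mkQ I.toSubmodule, mkQ_factors_through_trace]
  simp [LinearMap.mem_ker.1 hx]

end CommRing

section Field

variable {ι K : Type*} [Fintype ι] [DecidableEq ι] [Field K]
  {I : LieIdeal K (Matrix ι ι K)} {i j : ι}

theorem single_one_mem_of_single_mem {c : K} (hc : c ≠ 0) (h : single i j c ∈ I) :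
    single i j (1 : K) ∈ I := by
  simpa [smul_single, hc] using I.smul_mem c⁻¹ h

theorem single_mem_of_trace_ne_zero {t : Matrix ι ι K} (ht : t ∈ I) (htr : t.trace ≠ 0)
    (hij : i ≠ j) (hdiag : single i i (1 : K) - single j j 1 ∈ I) : single i j (1 : K) ∈ I := by
  by_cases hk : ∃ k, k ≠ i ∧ k ≠ j
  · obtain ⟨k, hki, hkj⟩ := hk
    have hik : single i k (1 : K) ∈ I := by
      simpa [single_apply, hij.symm, hki.symm, hkj.symm] using
        single_diag_sub_diag_mem hdiag hki.symm
    exact single_mem_of_single_mem_row hik hij 1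
  · have huniv : (Finset.univ : Finset ι) = {i, j} := by
      push Not at hk
      ext k
      simpa [or_iff_not_imp_left] using hk k
    have htrace : t.trace = t i i + t j j := by
      simp [trace, huniv, hij]
    -- If `t i i = t j j`, then `tr t = 2 * t i i`, so `2 ≠ 0`.
    by_cases hdiff : t i i = t j j
    · have htwo : (2 : K) ≠ 0 := by grind
      refine single_one_mem_of_single_mem htwo ?_
      simpa [hij, hij.symm, one_add_one_eq_two] using single_diag_sub_diag_mem hdiag hij
    · exact single_one_mem_of_single_mem (sub_ne_zero.2 hdiff) (single_diag_sub_diag_mem ht hij)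

theorem eq_top_of_offDiag_ne_zero_of_trace_ne_zero {b t : Matrix ι ι K} (hb : b ∈ I)
    (hij : i ≠ j) (hbij : b i j ≠ 0) (ht : t ∈ I) (htr : t.trace ≠ 0) : I = ⊤ := by
  have hdiag : single i i (1 : K) - single j j 1 ∈ I := by
    simpa [smul_sub, smul_single, hbij] using
      I.smul_mem (b i j)⁻¹ (single_self_sub_single_self_mem hb hij)
  have hdiag' : single j j (1 : K) - single i i 1 ∈ I := by
    simpa using I.neg_mem hdiag
  have hsij := single_mem_of_trace_ne_zero ht htr hij hdiag
  have hsji := single_mem_of_trace_ne_zero ht htr hij.symm hdiag'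
  have hoff (p q : ι) (hpq : p ≠ q) : single p q (1 : K) ∈ I := by
    rcases eq_or_ne q i with rfl | hqi
    · exact single_mem_of_single_mem_col hsji hpq 1
    · exact single_mem_of_single_mem_col (single_mem_of_single_mem_row hsij hqi.symm 1) hpq 1
  have hcoatom : IsCoatom (LinearMap.ker (traceLinearMap ι K K)) :=
    LinearMap.isCoatom_ker_of_surjective <|
      LinearMap.surjective fun h ↦ htr (LinearMap.congr_fun h t)
  rcases hcoatom.le_iff.1 (ker_trace_le_of_forall_single_mem hoff) with htop | hker
  · exact (LieSubmodule.toSubmodule_eq_top _).1 htop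
  · exact absurd (hker.le ht) htr

end Field

end MatrixLieIdeal

theorem span_mlImage_eq_top_of_offDiag_ne_zero_of_trace_ne_zero {K ι : Type} [Field K]
    [Fintype ι] [DecidableEq ι] {m : ℕ} {α : Equiv.Perm (Fin m) → K}
    {a a' : Fin m → Matrix ι ι K} {i j : ι} (hij : i ≠ j)
    (ha : mlEval α a i j ≠ 0) (ha' : (mlEval α a').trace ≠ 0) :
    Submodule.span K (mlImage α : Set (Matrix ι ι K)) = ⊤ := by
  have mem (c : Fin m → Matrix ι ι K) : mlEval α c ∈ mlLieIdeal α :=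
    Submodule.subset_span ⟨c, rfl⟩
  exact (LieSubmodule.toSubmodule_eq_top _).2
    (MatrixLieIdeal.eq_top_of_offDiag_ne_zero_of_trace_ne_zero (mem a) hij ha (mem a') ha')

end Lie

section Grading

variable {ι G : Type*} [AddCommGroup G]

/-- The component of degree `g` of the elementary grading of a matrix algebra defined by
`d : ι → G`, in which the matrix unit at `(i, j)` has degree `d j - d i`. The Vasilovsky grading is
the case where `d : Fin n → ZMod n` is the cast. -/
def elementaryGrading (R : Type*) [Semiring R] (d : ι → G) (g : G) :
    Submodule R (Matrix ι ι R) where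
  carrier := {a | ∀ i j, d j - d i ≠ g → a i j = 0}
  add_mem' ha hb i j h := by simp [ha i j h, hb i j h]
  zero_mem' _ _ _ := rfl
  smul_mem' c a ha i j h := by simp [ha i j h]

variable {R : Type*} [Semiring R] {d : ι → G} {g : G} {a : Matrix ι ι R}

instance elementaryGrading.gradedMonoid [Fintype ι] [DecidableEq ι] :
    SetLike.GradedMonoid (elementaryGrading R d) where
  one_mem i j h := one_apply_ne fun hij ↦ h (by simp [hij])
  mul_mem g h a b ha hb i j hij := by
    refine Finset.sum_eq_zero fun k _ ↦ ?_
    by_cases hik : d k - d i = g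
    · have hkj : d j - d k ≠ h := fun hkj ↦ hij (by rw [← hik, ← hkj]; abel)
      simp [hb k j hkj]
    · simp [ha i k hik]

theorem single_mem_elementaryGrading [DecidableEq ι] (d : ι → G) (p q : ι) (c : R) :
    single p q c ∈ elementaryGrading R d (d q - d p) := fun i j h ↦
  single_apply_of_ne _ _ _ _ _ fun ⟨hpi, hqj⟩ ↦ h (by rw [hpi, hqj])

theorem diag_eq_zero_of_mem_elementaryGrading (hg : g ≠ 0) (ha : a ∈ elementaryGrading R d g) :
    a.diag = 0 :=
  funext fun i ↦ ha i i (by simpa using hg.symm)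

theorem mlEval_mem_elementaryGrading {K ι : Type} [Field K] [Fintype ι] [DecidableEq ι] {d : ι → G}
    {m : ℕ} (α : Equiv.Perm (Fin m) → K) {g : Fin m → G} {a : Fin m → Matrix ι ι K}
    (ha : ∀ i, a i ∈ elementaryGrading K d (g i)) :
    mlEval α a ∈ elementaryGrading K d (∑ i, g i) := by
  refine Submodule.sum_mem _ fun σ _ ↦ Submodule.smul_mem _ _ ?_
  rw [← Equiv.sum_comp σ g, ← List.sum_ofFn]
  exact SetLike.list_prod_ofFn_mem_graded _ _ fun j ↦ ha (σ j)

end Grading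

/-- The evaluation of a multilinear polynomial on an algebra, as a multilinear map. -/
def mlMultilinearMap {K : Type} (A : Type) [Field K] [Ring A] [Algebra K A] {m : ℕ}
    (α : Equiv.Perm (Fin m) → K) : MultilinearMap K (fun _ : Fin m ↦ A) A :=
  ∑ σ : Equiv.Perm (Fin m), α σ • (MultilinearMap.mkPiAlgebraFin K m A).domDomCongr σ

theorem mlMultilinearMap_apply {K A : Type} [Field K] [Ring A] [Algebra K A] {m : ℕ}
    (α : Equiv.Perm (Fin m) → K) (a : Fin m → A) : mlMultilinearMap A α a = mlEval α a := by
  simp [mlMultilinearMap, mlEval]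

theorem linearMap_eq_zero_of_span_mlImage_eq_top {K ι : Type} {V : Type*} [Field K]
    [Fintype ι] [DecidableEq ι] [AddCommGroup V] [Module K V] {m : ℕ} {α : Equiv.Perm (Fin m) → K}
    (hspan : Submodule.span K (mlImage α : Set (Matrix ι ι K)) = ⊤) (φ : Matrix ι ι K →ₗ[K] V)
    (hφ : ∀ p q : Fin m → ι, φ (mlEval α fun i ↦ single (p i) (q i) 1) = 0) : φ = 0 := by
  have hcomp : φ.compMultilinearMap (mlMultilinearMap (Matrix ι ι K) α) = 0 := by
    refine Module.Basis.ext_multilinear (fun _ ↦ stdBasis K ι ι) fun v ↦ ?_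
    have hstdBasis (i : Fin m) : stdBasis K ι ι (v i) = single (v i).1 (v i).2 1 :=
      stdBasis_eq_single K _ _
    simpa [mlMultilinearMap_apply, hstdBasis] using hφ (fun i ↦ (v i).1) fun i ↦ (v i).2
  refine LinearMap.ext_on_range hspan fun a ↦ ?_
  simpa [mlMultilinearMap_apply] using MultilinearMap.congr_fun hcomp a

section Vasilovsky

variable {K : Type} [Field K] {n m : ℕ} {α : Equiv.Perm (Fin m) → K}

theorem fin_natCast_zmod_injective : Function.Injective fun i : Fin n ↦ (i.val : ZMod n) := by
  intro i j h
  exact Fin.ext (CharP.natCast_injOn_Iio (ZMod n) n i.2 j.2 h)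

theorem exists_offDiag_ne_zero_of_not_stmtS1 (h : ¬ StmtS1 n α) :
    ∃ (a : Fin m → Matrix (Fin n) (Fin n) K) (i j : Fin n), i ≠ j ∧ mlEval α a i j ≠ 0 := by
  simp only [StmtS1, not_forall] at h
  obtain ⟨g, a, ha, hg, hne⟩ := h
  have hdiag := diag_eq_zero_of_mem_elementaryGrading hg (mlEval_mem_elementaryGrading α ha)
  contrapose! hne
  ext i j
  rcases eq_or_ne i j with rfl | hij
  · exact congr_fun hdiag i
  · exact hne a i j hij

theorem exists_trace_ne_zero_of_not_stmtS2 (h : ¬ StmtS2 n α) :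
    ∃ a : Fin m → Matrix (Fin n) (Fin n) K, (mlEval α a).trace ≠ 0 := by
  simp only [StmtS2, not_forall] at h
  obtain ⟨_, a, _, _, hne⟩ := h
  exact ⟨a, hne⟩

theorem entry_mlEval_single_eq_zero_of_stmtS1 (h : StmtS1 n α) {i j : Fin n} (hij : i ≠ j)
    (p q : Fin m → Fin n) :
    mlEval α (fun k ↦ single (p k) (q k) (1 : K)) i j = 0 := by
  let d (i : Fin n) : ZMod n := i.val
  have hhomog (k : Fin m) := single_mem_elementaryGrading d (p k) (q k) (1 : K)
  have hd : d j - d i ≠ 0 := sub_ne_zero.2 (fin_natCast_zmod_injective.ne hij.symm)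
  by_cases hsum : ∑ k, (d (q k) - d (p k)) = 0
  · exact mlEval_mem_elementaryGrading α hhomog i j (hsum ▸ hd)
  · simp [h _ _ hhomog hsum]

theorem trace_mlEval_single_eq_zero_of_stmtS2 (h : StmtS2 n α) (p q : Fin m → Fin n) :
    (mlEval α fun k ↦ single (p k) (q k) (1 : K)).trace = 0 := by
  let d (i : Fin n) : ZMod n := i.val
  have hhomog (k : Fin m) := single_mem_elementaryGrading d (p k) (q k) (1 : K)
  by_cases hsum : ∑ k, (d (q k) - d (p k)) = 0
  · exact h _ _ hhomog hsum
  · have hmem := mlEval_mem_elementaryGrading α hhomog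
    have hdiag := diag_eq_zero_of_mem_elementaryGrading hsum hmem
    simp only [trace, hdiag, Pi.zero_apply, Finset.sum_const_zero]

theorem not_stmtS1_of_span_mlImage_eq_top (hn : 2 ≤ n)
    (hspan : Submodule.span K (mlImage α : Set (Matrix (Fin n) (Fin n) K)) = ⊤) :
    ¬ StmtS1 n α := by
  intro h
  have : Nontrivial (Fin n) := Fin.nontrivial_iff_two_le.2 hn
  obtain ⟨i, j, hij⟩ := exists_pair_ne (Fin n)
  have hentry : entryLinearMap K K i j = 0 :=
    linearMap_eq_zero_of_span_mlImage_eq_top hspan _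
      (entry_mlEval_single_eq_zero_of_stmtS1 h hij)
  simpa using LinearMap.congr_fun hentry (single i j 1)

theorem not_stmtS2_of_span_mlImage_eq_top [NeZero n]
    (hspan : Submodule.span K (mlImage α : Set (Matrix (Fin n) (Fin n) K)) = ⊤) :
    ¬ StmtS2 n α := by
  intro h
  have htrace : traceLinearMap (Fin n) K K = 0 :=
    linearMap_eq_zero_of_span_mlImage_eq_top hspan _ (trace_mlEval_single_eq_zero_of_stmtS2 h)
  simpa using LinearMap.congr_fun htrace (single 0 0 1)

end Vasilovsky

theorem stmt_8_general {K : Type} [Field K] {n : ℕ} (hn : 2 ≤ n) {m : ℕ}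
    (α : Equiv.Perm (Fin m) → K) :
    (¬ StmtS1 n α ∧ ¬ StmtS2 n α) ↔
      Submodule.span K (mlImage α : Set (Matrix (Fin n) (Fin n) K)) = ⊤ := by
  have : NeZero n := ⟨by lia⟩
  constructor
  · rintro ⟨hS1, hS2⟩
    obtain ⟨a, i, j, hij, ha⟩ := exists_offDiag_ne_zero_of_not_stmtS1 hS1
    obtain ⟨a', ha'⟩ := exists_trace_ne_zero_of_not_stmtS2 hS2
    exact span_mlImage_eq_top_of_offDiag_ne_zero_of_trace_ne_zero hij ha ha'
  · intro hspan
    exact ⟨not_stmtS1_of_span_mlImage_eq_top hn hspan, not_stmtS2_of_span_mlImage_eq_top hspan⟩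

/-- when `n` is invertible in `K`, a multilinear polynomial fails both (S1) and (S2)
iff the linear span of its image on `Mₙ(K)` is all of `Mₙ(K)`. -/
theorem stmt_8 {K : Type} [Field K] (n : ℕ) (hn : 2 ≤ n) (hchar : (n : K) ≠ 0) {m : ℕ}
    (α : Equiv.Perm (Fin m) → K) :
    (¬ StmtS1 n α ∧ ¬ StmtS2 n α) ↔
      Submodule.span K (mlImage α : Set (Matrix (Fin n) (Fin n) K)) = ⊤ :=
  stmt_8_general hn α
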